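/- There exists a constant C > 0 such that for all n ≥ 2, Pval(L^n) ≤ C · 2^{-n}. That is, the maximum fraction of the maximal isotropic subspaces of (ZMod 2)^{2n} that can simultaneously be given pairwise consistent outcomes decays exponentially: Pval(L^n) ≤ 2^{-n+O(1)}. -/

import Mathlib

open Finset

abbrev F2 := ZMod 2
/-- `F2^{2n}`, split into the first and last `n` coordinates. -/
abbrev PV (n : ℕ) := (Fin n → F2) × (Fin n → F2)

/-- Symplectic product on `F2^{2n}`: zero iff `a₁·b₂ = a₂·b₁`. -/
def symp {n : ℕ} (a b : PV n) : F2 :=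
  (∑ i, a.1 i * b.2 i) + (∑ i, a.2 i * b.1 i)

/-- A subspace is isotropic if the symplectic product vanishes on it. -/
def IsIsotropic {n : ℕ} (S : Submodule F2 (PV n)) : Prop :=
  ∀ x ∈ S, ∀ y ∈ S, symp x y = 0

/-- `Lset n k` = `L^n_k`, the set of `k`-dimensional isotropic subspaces of `F2^{2n}`. -/
def Lset (n k : ℕ) : Set (Submodule F2 (PV n)) :=
  {S | IsIsotropic S ∧ Module.finrank F2 S = k}

/-- Integer lift of a vector over `F2`, with values in `{0,1} ⊆ ℤ`. -/
def liftZ {n : ℕ} (v : Fin n → F2) : Fin n → ℤ := fun i => ((v i).val : ℤ)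

def dotZ {n : ℕ} (a b : Fin n → ℤ) : ℤ := ∑ i, a i * b i

/-- The phase `i^{x̂₁·x̂₂} · i^{ŷ₁·ŷ₂} · i^{−((x+y)^^₁·(x+y)^^₂)} · (−1)^{x̂₂·ŷ₁}`. -/
noncomputable def phase {n : ℕ} (x y : PV n) : ℂ :=
  Complex.I ^ (dotZ (liftZ x.1) (liftZ x.2)) *
  Complex.I ^ (dotZ (liftZ y.1) (liftZ y.2)) *
  Complex.I ^ (-(dotZ (liftZ (x + y).1) (liftZ (x + y).2))) *
  (-1 : ℂ) ^ (dotZ (liftZ x.2) (liftZ y.1))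

/-- `w(x,y) ∈ {0,1} ⊆ F2`: zero iff the phase equals `1`. -/
noncomputable def wght {n : ℕ} (x y : PV n) : F2 :=
  if phase x y = 1 then 0 else 1

/-- An outcome of an isotropic subspace `S` is `f : S → F2` with
`f(x+y) = f(x)+f(y)+w(x,y)`. -/
def IsOutcome {n : ℕ} (S : Submodule F2 (PV n)) (f : S → F2) : Prop :=
  ∀ x y : S, f (x + y) = f x + f y + wght (x : PV n) (y : PV n)

/-- Two outcomes are consistent if they agree on the intersection of their domains. -/
def ConsistentOn {n : ℕ} {S₁ S₂ : Submodule F2 (PV n)} (f₁ : S₁ → F2) (f₂ : S₂ → F2) : Prop :=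
  ∀ v (h1 : v ∈ S₁) (h2 : v ∈ S₂), f₁ ⟨v, h1⟩ = f₂ ⟨v, h2⟩

/-!
Pairwise consistent outcomes on the Lagrangians in `D` glue to a function `g` on `F2^{2n}`, and
no `S ∈ D` contains a *frustrated* pair: a basis `x, y` of an isotropic plane at which `g` violates
the outcome relation. By the Mermin–Peres argument, every magic square has a frustrated line, and
there are so many magic squares that a constant proportion of all pairs `(x, y)` is frustrated.

A family of Lagrangians containing an isotropic `U` that meets a set `B` too rarely must be small:
`∑ S, |B ∩ S|` and `∑ S, |B ∩ S| ^ 2` over all Lagrangians `S ⊇ U` are determined by the numbers of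
vectors and of orthogonal pairs in `B`, and the latter is close to its expected value by Fourier
analysis. Applied above a vector `x` with many frustrated partners, this shows that only a
proportion of about `2 ^ (-n)` of the Lagrangians through `x` lies in `D`. Hence the members of `D`
contain such vectors `x` unusually rarely, and a second application, with `U = 0`, gives the bound
on `D`.
-/

section Lagrangians

open Submodule Module

variable {K V : Type*} [Field K] [AddCommGroup V] [Module K V] {ω : LinearMap.BilinForm K V}
  {U W S : Submodule K V} {x y : V} {n j : ℕ}

lemma orthogonal_sup : ω.orthogonal (U ⊔ W) = ω.orthogonal U ⊓ ω.orthogonal W := by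
  refine le_antisymm (le_inf (LinearMap.BilinForm.orthogonal_le le_sup_left)
    (LinearMap.BilinForm.orthogonal_le le_sup_right)) fun y hy z hz ↦ ?_
  obtain ⟨u, hu, w, hw, rfl⟩ := mem_sup.1 hz
  rw [map_add, LinearMap.add_apply, hy.1 u hu, hy.2 w hw, add_zero]

lemma mem_orthogonal_span_singleton : y ∈ ω.orthogonal (K ∙ x) ↔ ω x y = 0 := by
  refine ⟨fun hy ↦ hy x (mem_span_singleton_self x), fun hxy z hz ↦ ?_⟩
  obtain ⟨r, rfl⟩ := mem_span_singleton.1 hz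
  rw [map_smul, LinearMap.smul_apply, hxy, smul_zero]

lemma sup_span_singleton_le_orthogonal (hω : ω.IsAlt) (hU : U ≤ ω.orthogonal U)
    (hx : x ∈ ω.orthogonal U) : U ⊔ K ∙ x ≤ ω.orthogonal (U ⊔ K ∙ x) := by
  rw [orthogonal_sup]
  refine sup_le (le_inf hU fun u hu ↦ ?_) ((span_singleton_le_iff_mem _ _).2 ⟨hx, ?_⟩)
  · exact mem_orthogonal_span_singleton.2 (hω.eq_iff.1 (hx u hu))
  · exact mem_orthogonal_span_singleton.2 (hω.self_eq_zero x)

lemma orthogonal_eq_self_iff [FiniteDimensional K V] (hn : ω.Nondegenerate)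
    (hV : finrank K V = 2 * n) :
    ω.orthogonal S = S ↔ S ≤ ω.orthogonal S ∧ finrank K S = n := by
  have hrank := LinearMap.BilinForm.finrank_orthogonal hn S
  have hle := S.finrank_le
  refine ⟨fun h ↦ ⟨h.ge, ?_⟩, fun h ↦ (eq_of_le_of_finrank_eq h.1 ?_).symm⟩
  · rw [h] at hrank
    lia
  · lia

variable [Fintype V]

open scoped Classical in
/-- The Lagrangian (self-orthogonal) subspaces of `V` that contain `U`. -/
noncomputable def lagrangiansAbove (ω : LinearMap.BilinForm K V) (U : Submodule K V) :
    Finset (Submodule K V) :=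
  {S | U ≤ S ∧ ω.orthogonal S = S}

lemma mem_lagrangiansAbove : S ∈ lagrangiansAbove ω U ↔ U ≤ S ∧ ω.orthogonal S = S := by
  simp [lagrangiansAbove]

open scoped Classical in
lemma filter_mem_lagrangiansAbove (x : V) :
    {S ∈ lagrangiansAbove ω U | x ∈ S} = lagrangiansAbove ω (U ⊔ K ∙ x) := by
  ext S
  simp only [mem_filter, mem_lagrangiansAbove, sup_le_iff, span_singleton_le_iff_mem]
  tauto

open scoped Classical in
lemma sum_card_filter_mem_lagrangiansAbove (B : Finset V) :
    ∑ S ∈ lagrangiansAbove ω U, #{x ∈ B | x ∈ S} =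
      ∑ x ∈ B, #(lagrangiansAbove ω (U ⊔ K ∙ x)) := by
  simp_rw [← filter_mem_lagrangiansAbove]
  exact sum_card_bipartiteAbove_eq_sum_card_bipartiteBelow fun S x ↦ x ∈ S

open scoped Classical in
lemma filter_mem_orthogonal_notMem (hS : S ∈ lagrangiansAbove ω U) :
    {x ∈ ({x | x ∈ ω.orthogonal U ∧ x ∉ U} : Finset V) | x ∈ S} =
      ({x | x ∈ S ∧ x ∉ U} : Finset V) := by
  obtain ⟨hUS, hSS⟩ := mem_lagrangiansAbove.1 hS
  ext x
  have hSU : x ∈ S → x ∈ ω.orthogonal U := fun hx ↦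
    LinearMap.BilinForm.orthogonal_le hUS (hSS.ge hx)
  simp only [mem_filter, mem_univ, true_and]
  tauto

/-- The number of Lagrangian subspaces of a `2j`-dimensional symplectic space over a field with
`q` elements. -/
def lagrangianCount (q j : ℕ) : ℕ := ∏ i ∈ range j, (q ^ (i + 1) + 1)

lemma lagrangianCount_succ (q j : ℕ) :
    lagrangianCount q (j + 1) = lagrangianCount q j * (q ^ (j + 1) + 1) :=
  prod_range_succ _ _

lemma lagrangianCount_pos (q j : ℕ) : 0 < lagrangianCount q j :=
  prod_pos fun _ _ ↦ Nat.succ_pos _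

lemma pow_add_two_mul_sub_pow (q k m : ℕ) :
    q ^ (k + 2 * m) - q ^ k = (q ^ m + 1) * (q ^ (k + m) - q ^ k) := by
  rw [pow_add, pow_add, ← Nat.mul_sub_one, ← Nat.mul_sub_one, pow_mul', mul_left_comm,
    ← Nat.sq_sub_sq, one_pow]

variable [Fintype K]

open scoped Classical in
lemma card_filter_mem_submodule (S : Submodule K V) :
    #{x | x ∈ S} = Fintype.card K ^ finrank K S := by
  rw [← Fintype.card_subtype, ← card_eq_pow_finrank (K := K) (V := S)]

open scoped Classical in
lemma card_filter_mem_notMem (hUW : U ≤ W) :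
    #{x | x ∈ W ∧ x ∉ U} = Fintype.card K ^ finrank K W - Fintype.card K ^ finrank K U := by
  rw [← card_filter_mem_submodule, ← card_filter_mem_submodule, ← card_sdiff_of_subset,
    filter_and_not]
  exact monotone_filter_right _ fun x _ hx ↦ hUW hx

lemma card_lagrangiansAbove (hω : ω.IsAlt) (hn : ω.Nondegenerate) (hV : finrank K V = 2 * n)
    (hU : U ≤ ω.orthogonal U) (hj : finrank K U + j = n) :
    #(lagrangiansAbove ω U) = lagrangianCount (Fintype.card K) j := by
  classical
  set q := Fintype.card K
  have hq1 : 1 < q := Fintype.one_lt_card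
  induction j generalizing U with
  | zero =>
    have hlag : lagrangiansAbove ω U = {U} := by
      ext S
      rw [mem_lagrangiansAbove, mem_singleton, orthogonal_eq_self_iff hn hV]
      refine ⟨fun ⟨hUS, _, hrank⟩ ↦ (eq_of_le_of_finrank_eq hUS (by rw [hrank]; lia)).symm, ?_⟩
      rintro rfl
      exact ⟨le_rfl, hU, by lia⟩
    rw [hlag, card_singleton, lagrangianCount, prod_range_zero]
  | succ j ih =>
    have hcount := sum_card_filter_mem_lagrangiansAbove (ω := ω) (U := U)
      {x | x ∈ ω.orthogonal U ∧ x ∉ U}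
    have hleft : ∀ S ∈ lagrangiansAbove ω U,
        #{x ∈ ({x | x ∈ ω.orthogonal U ∧ x ∉ U} : Finset V) | x ∈ S} =
          q ^ n - q ^ finrank K U := by
      intro S hS
      obtain ⟨hUS, hSS⟩ := mem_lagrangiansAbove.1 hS
      rw [filter_mem_orthogonal_notMem hS, card_filter_mem_notMem hUS,
        ((orthogonal_eq_self_iff hn hV).1 hSS).2]
    have hright : ∀ x ∈ ({x | x ∈ ω.orthogonal U ∧ x ∉ U} : Finset V),
        #(lagrangiansAbove ω (U ⊔ K ∙ x)) = lagrangianCount q j := by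
      intro x hx
      obtain ⟨-, hxU, hx⟩ := mem_filter.1 hx
      exact ih (sup_span_singleton_le_orthogonal hω hU hxU)
        (by rw [finrank_sup_span_singleton hx]; lia)
    rw [sum_const_nat hleft, sum_const_nat hright, card_filter_mem_notMem hU,
      LinearMap.BilinForm.finrank_orthogonal hn, hV] at hcount
    have hlt : q ^ finrank K U < q ^ n := Nat.pow_lt_pow_right hq1 (by lia)
    rw [show 2 * n - finrank K U = finrank K U + 2 * (j + 1) by lia, pow_add_two_mul_sub_pow,
      hj] at hcount
    rw [lagrangianCount_succ]
    refine Nat.eq_of_mul_eq_mul_right (Nat.sub_pos_of_lt hlt) (hcount.trans ?_)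
    ring

end Lagrangians

section Characters

open Module

variable {K V : Type*} [Field K] [AddCommGroup V] [Module K V] {ω : LinearMap.BilinForm K V}
  {ψ : AddChar K ℂ}

lemma sum_addChar_dual [Fintype V] (hψ : ψ.IsPrimitive) {φ : Dual K V} (hφ : φ ≠ 0) :
    ∑ x, ψ (φ x) = 0 := by
  obtain ⟨x, hx⟩ := DFunLike.ne_iff.1 hφ
  obtain ⟨r, hr⟩ := DFunLike.ne_iff.1 (hψ hx)
  refine AddChar.sum_eq_zero_of_ne_one (ψ := ψ.compAddMonoidHom φ.toAddMonoidHom)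
    (DFunLike.ne_iff.2 ⟨r • x, ?_⟩)
  simpa [mul_comm] using hr

lemma sum_norm_sq_sum_addChar_bilinForm [Finite K] [Fintype V] (hψ : ψ.IsPrimitive)
    (hn : ω.Nondegenerate) (B : Finset V) :
    ∑ x, ‖∑ y ∈ B, ψ (ω x y)‖ ^ 2 = Fintype.card V * #B := by
  classical
  have hortho (y z : V) : ∑ x, ψ (ω x y) * starRingEnd ℂ (ψ (ω x z)) =
      if y = z then (Fintype.card V : ℂ) else 0 := by
    simp_rw [← AddChar.map_neg_eq_conj, ← AddChar.map_add_eq_mul, ← sub_eq_add_neg, ← map_sub]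
    split_ifs with hyz
    · simp [hyz]
    · exact sum_addChar_dual hψ (φ := ω.flip (y - z)) fun h ↦
        hyz (sub_eq_zero.1 (hn.2 _ fun x ↦ DFunLike.congr_fun h x))
  have hexpand : ((∑ x, ‖∑ y ∈ B, ψ (ω x y)‖ ^ 2 : ℝ) : ℂ) =
      ∑ y ∈ B, ∑ z ∈ B, ∑ x, ψ (ω x y) * starRingEnd ℂ (ψ (ω x z)) := by
    push_cast
    simp_rw [← Complex.mul_conj', map_sum, sum_mul_sum]
    rw [sum_comm]
    exact sum_congr rfl fun y _ ↦ sum_comm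
  simp_rw [hortho, sum_ite_eq, sum_ite_mem, inter_self, sum_const, nsmul_eq_mul] at hexpand
  exact_mod_cast hexpand.trans (mul_comm _ _)

lemma norm_sum_sum_addChar_bilinForm_sq_le [Finite K] [Fintype V]
    (hψ : ψ.IsPrimitive) (hn : ω.Nondegenerate) (A B : Finset V) :
    ‖∑ x ∈ A, ∑ y ∈ B, ψ (ω x y)‖ ^ 2 ≤ Fintype.card V * (#A * #B) :=
  calc
    _ ≤ (∑ x ∈ A, ‖∑ y ∈ B, ψ (ω x y)‖) ^ 2 := by gcongr; exact norm_sum_le _ _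
    _ ≤ #A * ∑ x ∈ A, ‖∑ y ∈ B, ψ (ω x y)‖ ^ 2 := sq_sum_le_card_mul_sum_sq
    _ ≤ #A * ∑ x, ‖∑ y ∈ B, ψ (ω x y)‖ ^ 2 := by gcongr; exact A.subset_univ
    _ = _ := by rw [sum_norm_sq_sum_addChar_bilinForm hψ hn, mul_left_comm]

open scoped Classical in
lemma card_mul_card_filter_bilinForm_eq_zero [Fintype K] (hψ : ψ.IsPrimitive)
    (A B : Finset V) :
    (Fintype.card K * #{p ∈ A ×ˢ B | ω p.1 p.2 = 0} : ℂ) =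
      ∑ c, ∑ x ∈ A, ∑ y ∈ B, ψ.mulShift c (ω x y) := by
  have hdetect (p : V × V) :
      ∑ c, ψ (c * ω p.1 p.2) = if ω p.1 p.2 = 0 then (Fintype.card K : ℂ) else 0 := by
    rw [AddChar.sum_mulShift _ hψ, Nat.cast_ite, Nat.cast_zero]
  simp_rw [← sum_product' A B, AddChar.mulShift_apply]
  rw [sum_comm]
  simp_rw [hdetect, ← sum_filter, sum_const, nsmul_eq_mul, mul_comm]

open scoped Classical in
lemma card_mul_card_filter_bilinForm_eq_zero_le [Fintype K] [Finite V] {n : ℕ}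
    (hn : ω.Nondegenerate) (hV : finrank K V = 2 * n) (B : Finset V) :
    (Fintype.card K * #{p ∈ B ×ˢ B | ω p.1 p.2 = 0} : ℝ) ≤
      #B ^ 2 + Fintype.card K * (Fintype.card K ^ n * #B) := by
  have := Fintype.ofFinite V
  have hψ := AddChar.FiniteField.primitiveChar_to_Complex_isPrimitive K
  set ψ := AddChar.FiniteField.primitiveChar_to_Complex K
  let T (c : K) : ℂ := ∑ x ∈ B, ∑ y ∈ B, ψ.mulShift c (ω x y)
  have hT0 : ‖T 0‖ = #B ^ 2 := by simp [T, sq]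
  have hT {c : K} (hc : c ≠ 0) : ‖T c‖ ≤ Fintype.card K ^ n * #B := by
    have h := norm_sum_sum_addChar_bilinForm_sq_le (AddChar.IsPrimitive.of_ne_one (hψ hc)) hn B B
    rw [card_eq_pow_finrank (K := K) (V := V), hV] at h
    refine le_of_sq_le_sq (h.trans_eq ?_) (by positivity)
    push_cast
    ring
  calc
    _ = ‖∑ c, T c‖ := by
      rw [← card_mul_card_filter_bilinForm_eq_zero hψ]
      norm_cast
    _ ≤ ‖T 0‖ + ∑ c ∈ univ.erase 0, ‖T c‖ :=
      (norm_sum_le _ _).trans_eq (add_sum_erase _ _ (mem_univ _)).symm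
    _ ≤ #B ^ 2 + ∑ _c ∈ univ.erase (0 : K), Fintype.card K ^ n * (#B : ℝ) := by
      rw [hT0]
      gcongr with c hc
      exact hT (ne_of_mem_erase hc)
    _ ≤ _ := by
      rw [sum_const, nsmul_eq_mul]
      gcongr
      exact (univ.erase (0 : K)).card_le_univ

end Characters

section Discrepancy

lemma card_mul_sq_le_of_sum_le_half {ι : Type*} {s A : Finset ι} (hA : A ⊆ s) {X : ι → ℝ}
    {e v : ℝ} (he : 0 ≤ e) (hv : ∑ i ∈ s, (X i - e) ^ 2 ≤ v)
    (hX : ∑ i ∈ A, X i ≤ #A * (e / 2)) : #A * e ^ 2 ≤ 4 * v := by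
  obtain rfl | hne := A.eq_empty_or_nonempty
  · have := (sum_nonneg fun i _ ↦ sq_nonneg (X i - e)).trans hv
    simpa
  have hdef : #A * (e / 2) ≤ ∑ i ∈ A, (e - X i) := by
    rw [sum_sub_distrib, sum_const, nsmul_eq_mul]
    linarith
  have hcs : (#A * (e / 2)) ^ 2 ≤ #A * v := calc
    _ ≤ (∑ i ∈ A, (e - X i)) ^ 2 := by gcongr
    _ ≤ #A * ∑ i ∈ A, (e - X i) ^ 2 := sq_sum_le_card_mul_sum_sq
    _ ≤ #A * ∑ i ∈ s, (X i - e) ^ 2 := by simp_rw [sub_sq_comm e]; gcongr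
    _ ≤ #A * v := by gcongr
  refine le_of_mul_le_mul_left (a := (#A : ℝ)) ?_ (by exact_mod_cast hne.card_pos)
  linarith

lemma sum_sub_sq_of_card_mul_eq_sum {ι : Type*} {s : Finset ι} {X : ι → ℝ} {e : ℝ}
    (he : #s * e = ∑ i ∈ s, X i) : ∑ i ∈ s, (X i - e) ^ 2 = ∑ i ∈ s, X i ^ 2 - #s * e ^ 2 := by
  simp_rw [sub_sq, sum_add_distrib, sum_sub_distrib, ← sum_mul, ← mul_sum, ← he, sum_const,
    nsmul_eq_mul]
  ring

open Submodule Module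

variable {K V : Type*} [Field K] [AddCommGroup V] [Module K V] {ω : LinearMap.BilinForm K V}
  {U S : Submodule K V} {x y : V} {n j : ℕ} [Fintype V]

open scoped Classical in
lemma sum_card_filter_mem_lagrangiansAbove_sq (B : Finset V) :
    ∑ S ∈ lagrangiansAbove ω U, #{x ∈ B | x ∈ S} ^ 2 =
      ∑ x ∈ B, ∑ y ∈ B, #(lagrangiansAbove ω (U ⊔ K ∙ x ⊔ K ∙ y)) := by
  simp_rw [← sum_card_filter_mem_lagrangiansAbove, sq, ← smul_eq_mul, ← sum_const,
    ← filter_mem_lagrangiansAbove]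
  exact sum_comm' fun S x ↦ by simp only [mem_filter]; tauto

variable [Fintype K]

open scoped Classical in
lemma card_lagrangiansAbove_sup_sup_le (hω : ω.IsAlt) (hn : ω.Nondegenerate)
    (hV : finrank K V = 2 * n) (hU : U ≤ ω.orthogonal U) (hj : finrank K U + (j + 2) = n)
    (hx : x ∈ ω.orthogonal U) (hxU : x ∉ U) (hy : y ∈ ω.orthogonal U) :
    #(lagrangiansAbove ω (U ⊔ K ∙ x ⊔ K ∙ y)) ≤
      (if y ∈ U ⊔ K ∙ x then lagrangianCount (Fintype.card K) (j + 1) else 0) +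
        if ω x y = 0 then lagrangianCount (Fintype.card K) j else 0 := by
  have hUx := sup_span_singleton_le_orthogonal hω hU hx
  have hrank : finrank K ↥(U ⊔ K ∙ x) = finrank K U + 1 := finrank_sup_span_singleton hxU
  by_cases hyx : y ∈ U ⊔ K ∙ x
  · rw [if_pos hyx, sup_eq_left.2 ((span_singleton_le_iff_mem _ _).2 hyx),
      card_lagrangiansAbove hω hn hV hUx (j := j + 1) (by lia)]
    exact Nat.le_add_right _ _
  by_cases hxy : ω x y = 0
  · have hyUx : y ∈ ω.orthogonal (U ⊔ K ∙ x) := by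
      rw [orthogonal_sup]
      exact ⟨hy, mem_orthogonal_span_singleton.2 hxy⟩
    rw [if_neg hyx, if_pos hxy, zero_add, card_lagrangiansAbove hω hn hV (j := j)
      (sup_span_singleton_le_orthogonal hω hUx hyUx)
      (by rw [finrank_sup_span_singleton hyx]; lia)]
  · have hempty : lagrangiansAbove ω (U ⊔ K ∙ x ⊔ K ∙ y) = ∅ := by
      refine eq_empty_of_forall_notMem fun S hS ↦ hxy ?_
      obtain ⟨hle, hS⟩ := mem_lagrangiansAbove.1 hS
      simp only [sup_le_iff, span_singleton_le_iff_mem] at hle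
      exact hS.ge hle.2 x hle.1.2
    simp [hempty]

open scoped Classical in
lemma sum_card_filter_mem_lagrangiansAbove_sq_le (hω : ω.IsAlt) (hn : ω.Nondegenerate)
    (hV : finrank K V = 2 * n) (hU : U ≤ ω.orthogonal U) (hj : finrank K U + (j + 2) = n)
    {B : Finset V} (hB : ∀ x ∈ B, x ∈ ω.orthogonal U ∧ x ∉ U) :
    ∑ S ∈ lagrangiansAbove ω U, #{x ∈ B | x ∈ S} ^ 2 ≤
      #B * (Fintype.card K ^ (finrank K U + 1) * lagrangianCount (Fintype.card K) (j + 1)) +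
        #{p ∈ B ×ˢ B | ω p.1 p.2 = 0} * lagrangianCount (Fintype.card K) j := by
  rw [sum_card_filter_mem_lagrangiansAbove_sq]
  calc
    _ ≤ ∑ x ∈ B, ∑ y ∈ B,
        ((if y ∈ U ⊔ K ∙ x then lagrangianCount (Fintype.card K) (j + 1) else 0) +
        if ω x y = 0 then lagrangianCount (Fintype.card K) j else 0) := by
      gcongr with x hx y hy
      exact card_lagrangiansAbove_sup_sup_le hω hn hV hU hj (hB x hx).1 (hB x hx).2 (hB y hy).1
    _ = ∑ x ∈ B, #{y ∈ B | y ∈ U ⊔ K ∙ x} * lagrangianCount (Fintype.card K) (j + 1) +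
        #{p ∈ B ×ˢ B | ω p.1 p.2 = 0} * lagrangianCount (Fintype.card K) j := by
      simp_rw [sum_add_distrib, ← sum_product' B B (fun x y ↦ if ω x y = 0 then _ else 0),
        ← sum_filter, sum_const, smul_eq_mul]
    _ ≤ _ := by
      rw [← smul_eq_mul (#B)]
      gcongr
      refine sum_le_card_nsmul _ _ _ fun x hx ↦ ?_
      gcongr
      rw [← finrank_sup_span_singleton (hB x hx).2, ← card_filter_mem_submodule]
      gcongr
      exact B.subset_univ

omit [Fintype V] in
open scoped Classical in
lemma card_filter_bilinForm_eq_zero_le [Finite V] {k : ℕ} (hn : ω.Nondegenerate)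
    (hV : finrank K V = 2 * (k + (j + 2))) (B : Finset V) :
    (#{p ∈ B ×ˢ B | ω p.1 p.2 = 0} : ℝ) ≤ (Fintype.card K ^ (j + 1) + 1) *
      (#B ^ 2 / (Fintype.card K ^ (j + 2) + 1) + Fintype.card K ^ (k + 1) * #B) := by
  have hpairs := card_mul_card_filter_bilinForm_eq_zero_le hn hV B
  have hq : (1 : ℝ) ≤ Fintype.card K := by exact_mod_cast Fintype.card_pos (α := K)
  generalize (Fintype.card K : ℝ) = q at *
  have hq0 : 0 < q := by positivity
  have hratio : q ^ (j + 2) + 1 ≤ q * (q ^ (j + 1) + 1) := by linarith [pow_succ' q (j + 1)]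
  refine le_of_mul_le_mul_left (hpairs.trans ?_) hq0
  calc
    _ = (#B : ℝ) ^ 2 / (q ^ (j + 2) + 1) * (q ^ (j + 2) + 1) +
        q * (q ^ (j + 1) * (q ^ (k + 1) * #B)) := by
      rw [div_mul_cancel₀ _ (by positivity)]
      ring
    _ ≤ (#B : ℝ) ^ 2 / (q ^ (j + 2) + 1) * (q * (q ^ (j + 1) + 1)) +
        q * ((q ^ (j + 1) + 1) * (q ^ (k + 1) * #B)) := by
      gcongr
      linarith
    _ = _ := by ring

open scoped Classical in
lemma sum_card_filter_mem_sub_sq_le (hω : ω.IsAlt) (hn : ω.Nondegenerate)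
    (hV : finrank K V = 2 * n) (hU : U ≤ ω.orthogonal U) (hj : finrank K U + (j + 2) = n)
    {B : Finset V} (hB : ∀ x ∈ B, x ∈ ω.orthogonal U ∧ x ∉ U) :
    ∑ S ∈ lagrangiansAbove ω U,
      ((#{x ∈ B | x ∈ S} : ℝ) - (#B : ℝ) / ((Fintype.card K : ℝ) ^ (j + 2) + 1)) ^ 2 ≤
      2 * ((Fintype.card K : ℝ) ^ (finrank K U + 1) *
        lagrangianCount (Fintype.card K) (j + 1) * #B) := by
  have hfirst := sum_card_filter_mem_lagrangiansAbove (ω := ω) (U := U) B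
  rw [sum_const_nat fun x hx ↦ card_lagrangiansAbove hω hn hV (j := j + 1)
    (sup_span_singleton_le_orthogonal hω hU (hB x hx).1)
    (by rw [finrank_sup_span_singleton (hB x hx).2]; lia)] at hfirst
  have hsecond := sum_card_filter_mem_lagrangiansAbove_sq_le hω hn hV hU hj hB
  have hcard := card_lagrangiansAbove hω hn hV hU hj
  have hpairs := card_filter_bilinForm_eq_zero_le hn (hj ▸ hV) B
  rw [lagrangianCount_succ, lagrangianCount_succ] at hcard
  rw [lagrangianCount_succ] at hfirst hsecond ⊢
  generalize lagrangianCount (Fintype.card K) j = N at *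
  rify at hfirst hsecond hcard
  have hmean : (#(lagrangiansAbove ω U) : ℝ) * (#B / (Fintype.card K ^ (j + 2) + 1)) =
      ∑ S ∈ lagrangiansAbove ω U, (#{x ∈ B | x ∈ S} : ℝ) := by
    rw [hfirst, hcard]
    field_simp
  rw [sum_sub_sq_of_card_mul_eq_sum hmean, sub_le_iff_le_add, hcard]
  refine hsecond.trans ?_
  grw [hpairs]
  push_cast
  apply le_of_eq
  field_simp
  ring

open scoped Classical in
lemma card_mul_card_le_of_sum_le (hω : ω.IsAlt) (hn : ω.Nondegenerate)
    (hV : finrank K V = 2 * n) (hU : U ≤ ω.orthogonal U) (hj : finrank K U + (j + 2) = n)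
    {B : Finset V} (hB : ∀ x ∈ B, x ∈ ω.orthogonal U ∧ x ∉ U) {A : Finset (Submodule K V)}
    (hA : A ⊆ lagrangiansAbove ω U)
    (hAB : 2 * (Fintype.card K ^ (j + 2) + 1) * ∑ S ∈ A, #{x ∈ B | x ∈ S} ≤ #A * #B) :
    #A * #B ≤ 16 * (Fintype.card K ^ (n + 1) * lagrangianCount (Fintype.card K) (j + 2)) := by
  obtain rfl | hne := B.eq_empty_or_nonempty
  · simp
  have hvar := sum_card_filter_mem_sub_sq_le hω hn hV hU hj hB
  rw [lagrangianCount_succ, ← hj]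
  rify at hAB ⊢
  have hB0 : (0 : ℝ) < #B := by exact_mod_cast hne.card_pos
  have hq : (1 : ℝ) ≤ Fintype.card K := by exact_mod_cast Fintype.card_pos (α := K)
  generalize (Fintype.card K : ℝ) = q at *
  have : 0 < q := by positivity
  have hmean : ∑ S ∈ A, (#{x ∈ B | x ∈ S} : ℝ) ≤ #A * ((#B : ℝ) / (q ^ (j + 2) + 1) / 2) := by
    field_simp
    linarith
  have h := card_mul_sq_le_of_sum_le_half hA (by positivity) hvar hmean
  refine le_of_mul_le_mul_right ?_ hB0
  calc
    (#A * #B * #B : ℝ) = #A * (#B / (q ^ (j + 2) + 1)) ^ 2 * (q ^ (j + 2) + 1) ^ 2 := by field_simp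
    _ ≤ 8 * (q ^ (finrank K U + 1) * lagrangianCount (Fintype.card K) (j + 1) * #B) *
        ((q ^ (j + 2) + q ^ (j + 2)) * (q ^ (j + 2) + 1)) := by
      rw [sq (q ^ (j + 2) + 1)]
      gcongr ?_ * ((q ^ (j + 2) + ?_) * _)
      · linarith
      · exact one_le_pow₀ hq
    _ = _ := by ring

end Discrepancy

section Avoidance

lemma mul_card_le_card_filter_mul_card_le_card {α : Type*} [Fintype α] {E : α → Finset α} {δ : ℝ}
    (hδ : 0 ≤ δ) (hE : 2 * δ * Fintype.card α ^ 2 ≤ ∑ x, (#(E x) : ℝ)) :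
    δ * Fintype.card α ≤ #{x | δ * Fintype.card α ≤ #(E x)} := by
  obtain hα | hα := (Fintype.card α).eq_zero_or_pos
  · simp [hα]
  have hupper : ∑ x, (#(E x) : ℝ) ≤ #{x | δ * Fintype.card α ≤ #(E x)} * Fintype.card α +
      Fintype.card α * (δ * Fintype.card α) := by
    rw [← nsmul_eq_mul, ← sum_const, ← nsmul_eq_mul (Fintype.card α), ← card_univ, ← sum_const,
      sum_filter, ← sum_add_distrib, card_univ]
    gcongr with x
    split_ifs with hx
    · grw [← hδ, zero_mul, add_zero, card_le_univ]
    · linarith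
  refine le_of_mul_le_mul_right ?_ (Nat.cast_pos.2 hα : (0 : ℝ) < Fintype.card α)
  linarith

open Submodule Module

variable {K V : Type*} [Field K] [Fintype K] [AddCommGroup V] [Fintype V] [Module K V]
  {ω : LinearMap.BilinForm K V} {x y : V} {n j : ℕ} {D : Finset (Submodule K V)}

/-- The vectors `x, y` form a basis of a two-dimensional isotropic subspace. -/
def IsIsotropicPair (ω : LinearMap.BilinForm K V) (x y : V) : Prop :=
  ω x y = 0 ∧ LinearIndependent K ![x, y]

omit [Fintype K] [Fintype V] in
lemma notMem_span_singleton_of_linearIndependent (h : LinearIndependent K ![x, y]) :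
    y ∉ K ∙ x := by
  rw [mem_span_singleton, not_exists]
  exact (LinearIndependent.pair_iff' (h.ne_zero 0)).1 h

lemma card_eq_pow_mul_pow_of_finrank_eq (hV : finrank K V = 2 * (j + 3)) :
    (Fintype.card V : ℝ) = Fintype.card K ^ (j + 4) * Fintype.card K ^ (j + 2) := by
  rw [card_eq_pow_finrank (K := K) (V := V), hV]
  push_cast
  ring

open scoped Classical in
lemma card_filter_mem_mul_card_le (hω : ω.IsAlt) (hn : ω.Nondegenerate)
    (hV : finrank K V = 2 * (j + 3)) (hD : D ⊆ lagrangiansAbove ω ⊥) {B : Finset V}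
    (hB : ∀ y ∈ B, IsIsotropicPair ω x y)
    (hDB : ∀ S ∈ D, x ∈ S → ∀ y ∈ B, y ∉ S) :
    #{S ∈ D | x ∈ S} * #B ≤
      16 * (Fintype.card K ^ (j + 4) * lagrangianCount (Fintype.card K) (j + 2)) := by
  obtain rfl | ⟨y, hy⟩ := B.eq_empty_or_nonempty
  · simp
  have hx : x ≠ 0 := (hB y hy).2.ne_zero 0
  refine card_mul_card_le_of_sum_le hω hn hV (U := K ∙ x) (j := j) (B := B) ?_ ?_ ?_ ?_ ?_
  · simpa using sup_span_singleton_le_orthogonal (U := ⊥) (x := x) hω bot_le (by simp)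
  · rw [finrank_span_singleton hx]
    lia
  · exact fun y hy ↦ ⟨mem_orthogonal_span_singleton.2 (hB y hy).1,
      notMem_span_singleton_of_linearIndependent (hB y hy).2⟩
  · rw [← bot_sup_eq (K ∙ x), ← filter_mem_lagrangiansAbove]
    exact filter_subset_filter _ hD
  · rw [sum_eq_zero fun S hS ↦ ?_, mul_zero]
    · exact Nat.zero_le _
    · obtain ⟨hSD, hxS⟩ := mem_filter.1 hS
      rw [filter_false_of_mem (hDB S hSD hxS), card_empty]

open scoped Classical in
lemma mul_card_filter_mem_le (hω : ω.IsAlt) (hn : ω.Nondegenerate)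
    (hV : finrank K V = 2 * (j + 3)) (hD : D ⊆ lagrangiansAbove ω ⊥) {B : Finset V}
    (hB : ∀ y ∈ B, IsIsotropicPair ω x y)
    (hDB : ∀ S ∈ D, x ∈ S → ∀ y ∈ B, y ∉ S) {δ : ℝ} (hδ : δ * Fintype.card V ≤ #B) :
    δ * Fintype.card K ^ (j + 2) * #{S ∈ D | x ∈ S} ≤
      16 * lagrangianCount (Fintype.card K) (j + 2) := by
  have h := card_filter_mem_mul_card_le hω hn hV hD hB hDB
  have hq : (0 : ℝ) < Fintype.card K := by exact_mod_cast Fintype.card_pos (α := K)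
  rify at h
  rw [card_eq_pow_mul_pow_of_finrank_eq hV] at hδ
  grw [← hδ] at h
  refine le_of_mul_le_mul_left ?_ (pow_pos hq (j + 4))
  linarith

open scoped Classical in
lemma card_mul_card_le_or_card_le (hω : ω.IsAlt) (hn : ω.Nondegenerate)
    (hV : finrank K V = 2 * (j + 2)) (hD : D ⊆ lagrangiansAbove ω ⊥) {B : Finset V}
    (hB : ∀ x ∈ B, x ≠ 0) {t : ℝ} (ht : ∀ x ∈ B, #{S ∈ D | x ∈ S} ≤ t) :
    #D * #B ≤ 16 * (Fintype.card K ^ (j + 3) * lagrangianCount (Fintype.card K) (j + 2)) ∨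
      #D * #B ≤ 2 * (Fintype.card K ^ (j + 2) + 1) * (#B * t) := by
  rw [or_iff_not_imp_right, not_le]
  intro hlarge
  refine card_mul_card_le_of_sum_le hω hn hV bot_le (by rw [finrank_bot, zero_add])
    (fun x hx ↦ ⟨by simp, hB x hx⟩) hD ?_
  have hdouble : ∑ S ∈ D, #{x ∈ B | x ∈ S} = ∑ x ∈ B, #{S ∈ D | x ∈ S} :=
    sum_card_bipartiteAbove_eq_sum_card_bipartiteBelow fun S x ↦ x ∈ S
  have hsum : ∑ x ∈ B, (#{S ∈ D | x ∈ S} : ℝ) ≤ #B * t :=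
    (sum_le_card_nsmul _ _ _ ht).trans_eq (nsmul_eq_mul _ _)
  rw [hdouble]
  rify
  grw [hsum]
  exact hlarge.le

open scoped Classical in
lemma mul_card_le_of_forall_mem_le_card (hω : ω.IsAlt) (hn : ω.Nondegenerate)
    (hV : finrank K V = 2 * (j + 3)) {E : V → Finset V}
    (hE : ∀ x, ∀ y ∈ E x, IsIsotropicPair ω x y) {δ : ℝ} (hδ : 0 < δ) {G : Finset V}
    (hcardG : δ * Fintype.card V ≤ #G) (hcardE : ∀ x ∈ G, δ * Fintype.card V ≤ #(E x))
    (hD : D ⊆ lagrangiansAbove ω ⊥) (hDE : ∀ S ∈ D, ∀ x ∈ S, ∀ y ∈ E x, y ∉ S) :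
    δ * (Fintype.card K ^ (j + 3) * #D) ≤
      32 * (Fintype.card K * lagrangianCount (Fintype.card K) (j + 3)) := by
  have hcardV := card_eq_pow_mul_pow_of_finrank_eq hV
  have hq : (0 : ℝ) < Fintype.card K := by exact_mod_cast Fintype.card_pos (α := K)
  have hG0 : (0 : ℝ) < #G := lt_of_lt_of_le (by rw [hcardV]; positivity) hcardG
  have hG : ∀ x ∈ G, x ≠ 0 := by
    intro x hx
    have hEx : (0 : ℝ) < #(E x) := lt_of_lt_of_le (by rw [hcardV]; positivity) (hcardE x hx)
    obtain ⟨y, hy⟩ := card_pos.1 (Nat.cast_pos.1 hEx)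
    exact (hE x y hy).2.ne_zero 0
  have hlink : ∀ x ∈ G, (#{S ∈ D | x ∈ S} : ℝ) ≤
      16 * lagrangianCount (Fintype.card K) (j + 2) / (δ * Fintype.card K ^ (j + 2)) :=
    fun x hx ↦ (le_div_iff₀' (by positivity)).2
      (mul_card_filter_mem_le hω hn hV hD (hE x) (hDE · · x) (hcardE x hx))
  refine le_of_mul_le_mul_right ?_ hG0
  obtain h | h := card_mul_card_le_or_card_le hω hn hV hD hG hlink
  · rify at h
    calc
      _ = δ * Fintype.card K ^ (j + 3) * (#D * #G) := by ring
      _ ≤ δ * Fintype.card K ^ (j + 3) *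
          (16 * (Fintype.card K ^ (j + 4) * lagrangianCount (Fintype.card K) (j + 3))) := by gcongr
      _ = 16 * (Fintype.card K * lagrangianCount (Fintype.card K) (j + 3)) *
          (δ * Fintype.card V) := by
        rw [hcardV]
        ring
      _ ≤ 32 * (Fintype.card K * lagrangianCount (Fintype.card K) (j + 3)) * #G := by
        gcongr
        norm_num
  · calc
      _ = δ * Fintype.card K ^ (j + 3) * (#D * #G) := by ring
      _ ≤ δ * Fintype.card K ^ (j + 3) * (2 * (Fintype.card K ^ (j + 3) + 1) * (#G *
          (16 * lagrangianCount (Fintype.card K) (j + 2) / (δ * Fintype.card K ^ (j + 2))))) := by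
        gcongr
      _ = _ := by
        rw [lagrangianCount_succ _ (j + 2)]
        push_cast
        field_simp
        ring

lemma mul_card_le_of_forall_notMem (hω : ω.IsAlt) (hn : ω.Nondegenerate)
    (hV : finrank K V = 2 * (j + 3)) {E : V → Finset V}
    (hE : ∀ x, ∀ y ∈ E x, IsIsotropicPair ω x y) {δ : ℝ} (hδ : 0 < δ)
    (hdense : 2 * δ * Fintype.card V ^ 2 ≤ ∑ x, (#(E x) : ℝ))
    (hD : D ⊆ lagrangiansAbove ω ⊥) (hDE : ∀ S ∈ D, ∀ x ∈ S, ∀ y ∈ E x, y ∉ S) :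
    δ * (Fintype.card K ^ (j + 3) * #D) ≤
      32 * (Fintype.card K * lagrangianCount (Fintype.card K) (j + 3)) :=
  mul_card_le_of_forall_mem_le_card hω hn hV hE hδ
    (mul_card_le_card_filter_mul_card_le_card hδ.le hdense)
    (fun _ hx ↦ (mem_filter.1 hx).2) hD hDE

end Avoidance

section MagicSquares

open Submodule Module

variable {K V : Type*} [Field K] [AddCommGroup V] [Module K V]

lemma card_mul_card_filter_dual_eq [Fintype K] [DecidableEq K] [Fintype V]
    {φ : Dual K V} (hφ : φ ≠ 0) (c : K) :
    Fintype.card K * #{x | φ x = c} = Fintype.card V := by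
  have hfiber (d : K) : #{x | φ x = d} = #{x | φ x = c} :=
    AddMonoidHom.card_fiber_eq_of_mem_range φ (LinearMap.surjective hφ d)
      (LinearMap.surjective hφ c)
  rw [← card_univ (α := V), card_eq_sum_card_fiberwise (s := univ) (f := φ) (t := univ) (by simp),
    sum_const_nat fun d _ ↦ hfiber d, card_univ]

lemma card_sq_le_card_filter_bilinForm_eq [Fintype K] [DecidableEq K] [Fintype V]
    [Nontrivial V] {ω : LinearMap.BilinForm K V} (hn : ω.Nondegenerate) (c : K) :
    Fintype.card V ^ 2 ≤ 2 * Fintype.card K * #{p : V × V | ω p.1 p.2 = c} := by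
  classical
  have hx : ∀ x ∈ univ.erase (0 : V), Fintype.card V ≤ Fintype.card K * #{y | ω x y = c} := by
    refine fun x hx ↦ (card_mul_card_filter_dual_eq (fun h ↦ ne_of_mem_erase hx ?_) c).ge
    exact hn.1 x fun y ↦ DFunLike.congr_fun h y
  calc
    _ ≤ 2 * ((Fintype.card V - 1) * Fintype.card V) := by
      rw [sq, ← mul_assoc]
      gcongr
      have := Fintype.one_lt_card (α := V)
      lia
    _ ≤ 2 * ∑ x ∈ univ.erase (0 : V), Fintype.card K * #{y | ω x y = c} := by
      gcongr
      simpa [card_erase_of_mem] using card_nsmul_le_sum _ _ _ hx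
    _ ≤ 2 * ∑ x, Fintype.card K * #{y | ω x y = c} := by
      gcongr
      exact erase_subset _ _
    _ = _ := by
      rw [← mul_sum, mul_assoc]
      simp_rw [card_filter, ← univ_product_univ, sum_product]

variable {ω : LinearMap.BilinForm K V} {b c : V}

lemma mem_orthogonal_span_pair {x : V} :
    x ∈ ω.orthogonal (span K {b, c}) ↔ ω b x = 0 ∧ ω c x = 0 := by
  rw [span_insert, orthogonal_sup, Submodule.mem_inf, mem_orthogonal_span_singleton,
    mem_orthogonal_span_singleton]

lemma restrict_orthogonal_span_pair_nondegenerate [FiniteDimensional K V] (hω : ω.IsAlt)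
    (hn : ω.Nondegenerate) (hbc : ω b c ≠ 0) :
    (ω.restrict (ω.orthogonal (span K {b, c}))).Nondegenerate := by
  have hdisj : Disjoint (span K {b, c}) (ω.orthogonal (span K {b, c})) := by
    rw [disjoint_def]
    intro x hx hxo
    obtain ⟨s, t, rfl⟩ := mem_span_pair.1 hx
    have hcb : ω c b ≠ 0 := fun h ↦ hbc (hω.eq_iff.1 h)
    have h := mem_orthogonal_span_pair.1 hxo
    simp only [map_add, map_smul, hω.self_eq_zero, smul_eq_mul, mul_zero, zero_add, add_zero,
      mul_eq_zero, hbc, hcb, or_false] at h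
    rw [h.1, h.2, zero_smul, zero_smul, add_zero]
  rw [LinearMap.BilinForm.restrict_nondegenerate_iff_isCompl_orthogonal hω.isRefl,
    LinearMap.BilinForm.orthogonal_orthogonal hn hω.isRefl]
  exact ((LinearMap.BilinForm.isCompl_orthogonal_iff_disjoint hω.isRefl).2 hdisj).symm

lemma card_le_card_sq_mul_card_orthogonal_span_pair [Fintype K] [Finite V]
    (hn : ω.Nondegenerate) (b c : V) :
    Nat.card V ≤ Fintype.card K ^ 2 * Nat.card (ω.orthogonal (span K {b, c})) := by
  have hpair : finrank K (span K {b, c}) ≤ 2 := by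
    classical
    have h := finrank_span_finset_le_card (R := K) ({b, c} : Finset V)
    rw [coe_pair] at h
    exact h.trans card_le_two
  have horth := LinearMap.BilinForm.finrank_orthogonal hn (span K {b, c})
  rw [natCard_eq_pow_finrank (K := K), natCard_eq_pow_finrank (K := K) (V := ω.orthogonal _),
    Nat.card_eq_fintype_card, ← pow_add]
  exact Nat.pow_le_pow_right Fintype.card_pos (by lia)

section CharacteristicTwo

variable {V : Type*} [AddCommGroup V] [Module F2 V] {ω : LinearMap.BilinForm F2 V} {a b c d : V}

lemma apply_comm_of_isAlt (hω : ω.IsAlt) (x y : V) : ω x y = ω y x := by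
  rw [← hω.neg_eq, ZMod.neg_eq_self_mod_two]

/-- The data of a Mermin–Peres magic square with rows `a, b, a + b`; `c, d, c + d` and
`a + c, b + d, a + b + c + d`: any two entries in a row or a column are `ω`-orthogonal, while
the two diagonals of the upper left corner are hyperbolic pairs. -/
structure IsMagicSquare (ω : LinearMap.BilinForm F2 V) (a b c d : V) : Prop where
  row₁ : ω b a = 0
  row₂ : ω c d = 0
  column₁ : ω c a = 0
  column₂ : ω b d = 0
  diagonal : ω a d = 1
  antidiagonal : ω b c = 1

lemma IsMagicSquare.transpose (hω : ω.IsAlt) (h : IsMagicSquare ω a b c d) :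
    IsMagicSquare ω a c b d where
  row₁ := h.column₁
  row₂ := h.column₂
  column₁ := h.row₁
  column₂ := h.row₂
  diagonal := h.diagonal
  antidiagonal := by rw [apply_comm_of_isAlt hω, h.antidiagonal]

open scoped Classical in
lemma card_sq_le_card_filter_isMagicSquare [Fintype V] (hω : ω.IsAlt) (hn : ω.Nondegenerate)
    (hV : 8 ≤ Fintype.card V) (hbc : ω b c = 1) :
    Fintype.card V ^ 2 ≤ 64 * #{p : V × V | IsMagicSquare ω p.1 b c p.2} := by
  set W := ω.orthogonal (span F2 {b, c})
  have hW : Fintype.card V ≤ 4 * Fintype.card W := by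
    rw [← Nat.card_eq_fintype_card, ← Nat.card_eq_fintype_card (α := W)]
    exact card_le_card_sq_mul_card_orthogonal_span_pair hn b c
  have : Nontrivial W := Fintype.one_lt_card_iff_nontrivial.1 (by lia)
  have hpairs : Fintype.card W ^ 2 ≤ 4 * #{p : W × W | ω.restrict W p.1 p.2 = 1} :=
    card_sq_le_card_filter_bilinForm_eq
      (restrict_orthogonal_span_pair_nondegenerate hω hn (hbc ▸ one_ne_zero)) 1
  calc
    _ ≤ (4 * Fintype.card W) ^ 2 := by gcongr
    _ ≤ 64 * #{p : W × W | ω.restrict W p.1 p.2 = 1} := by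
      rw [mul_pow]
      linarith
    _ ≤ _ := by
      gcongr
      refine card_le_card_of_injOn (Prod.map (↑) (↑)) ?_
        (Subtype.val_injective.prodMap Subtype.val_injective).injOn
      rintro ⟨⟨a, ha⟩, d, hd⟩ had
      rw [mem_orthogonal_span_pair] at ha hd
      simpa using ⟨ha.1, hd.2, ha.2, hd.1, (mem_filter.1 had).2, hbc⟩

open scoped Classical in
lemma card_pow_four_le_card_filter_isMagicSquare [Fintype V] (hω : ω.IsAlt)
    (hn : ω.Nondegenerate) (hV : 8 ≤ Fintype.card V) :
    Fintype.card V ^ 4 ≤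
      256 * #{p : (V × V) × V × V | IsMagicSquare ω p.2.1 p.1.1 p.1.2 p.2.2} := by
  have : Nontrivial V := Fintype.one_lt_card_iff_nontrivial.1 (by lia)
  have hpairs : Fintype.card V ^ 2 ≤ 4 * #{p : V × V | ω p.1 p.2 = 1} :=
    card_sq_le_card_filter_bilinForm_eq hn 1
  calc
    _ ≤ 4 * (#{p : V × V | ω p.1 p.2 = 1} * Fintype.card V ^ 2) := by
      rw [← mul_assoc, pow_add _ 2 2]
      gcongr
    _ ≤ 4 * ∑ p : V × V with ω p.1 p.2 = 1,
        64 * #{q : V × V | IsMagicSquare ω q.1 p.1 p.2 q.2} := by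
      gcongr
      rw [← smul_eq_mul]
      exact card_nsmul_le_sum _ _ _ fun p hp ↦
        card_sq_le_card_filter_isMagicSquare hω hn hV (mem_filter.1 hp).2
    _ ≤ 4 * ∑ p : V × V, 64 * #{q : V × V | IsMagicSquare ω q.1 p.1 p.2 q.2} := by
      gcongr
      exact filter_subset _ _
    _ = _ := by
      rw [← mul_sum, ← mul_assoc, show 4 * 64 = 256 from rfl]
      simp_rw [card_filter, ← univ_product_univ (α := V × V) (β := V × V), sum_product]

lemma linearIndependent_pair_of_apply {x y u v : V} (hxu : ω x u = 1) (hyu : ω y u = 0)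
    (hyv : ω y v = 1) : LinearIndependent F2 ![x, y] := by
  refine LinearIndependent.pair_iff.2 fun s t hst ↦ ?_
  have hs : s = 0 := by simpa [hxu, hyu] using LinearMap.congr_fun (congrArg ω hst) u
  exact ⟨hs, by simpa [hs, hyv] using LinearMap.congr_fun (congrArg ω hst) v⟩

lemma IsMagicSquare.isIsotropicPair_rows (hω : ω.IsAlt) (h : IsMagicSquare ω a b c d) :
    IsIsotropicPair ω a b ∧ IsIsotropicPair ω c d ∧ IsIsotropicPair ω (a + b) (c + d) := by
  have hsymm := apply_comm_of_isAlt hω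
  have hca := h.column₁
  have hab : ω a b = 0 := hsymm a b ▸ h.row₁
  have hac : ω a c = 0 := hsymm a c ▸ h.column₁
  have hcb : ω c b = 1 := hsymm c b ▸ h.antidiagonal
  have hda : ω d a = 1 := hsymm d a ▸ h.diagonal
  have hdb : ω d b = 0 := hsymm d b ▸ h.column₂
  have hdc : ω d c = 0 := hsymm d c ▸ h.row₂
  refine ⟨⟨hab, linearIndependent_pair_of_apply h.diagonal h.column₂ h.antidiagonal⟩,
    ⟨h.row₂, linearIndependent_pair_of_apply hcb hdb hda⟩, ?_,
    linearIndependent_pair_of_apply (ω := ω) (u := c) (v := a) ?_ ?_ ?_⟩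
  · simp [hac, h.diagonal, h.antidiagonal, h.column₂, CharTwo.add_self_eq_zero]
  · simp [hac, h.antidiagonal]
  · simp [hω.self_eq_zero, hdc]
  · simp [hca, hda]

lemma card_le_card_mul_card_mul_card_of_injective {ι P Q R : Type*} [Fintype ι] [Fintype R]
    {s : Finset Q} {t : Finset P} (e : ι → Q → P × R) (he : ∀ i, Function.Injective (e i))
    (hst : ∀ q ∈ s, ∃ i, (e i q).1 ∈ t) : #s ≤ Fintype.card ι * (#t * Fintype.card R) := by
  classical
  calc
    _ ≤ #(univ.biUnion fun i ↦ {q ∈ s | (e i q).1 ∈ t}) :=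
      card_le_card fun q hq ↦ by simpa [hq] using hst q hq
    _ ≤ Fintype.card ι * #(t ×ˢ (univ : Finset R)) :=
      card_biUnion_le_card_mul _ _ _ fun i _ ↦
        card_le_card_of_injOn (e i) (fun q hq ↦ by simpa using (mem_filter.1 hq).2) (he i).injOn
    _ = _ := by rw [card_product, card_univ]

open scoped Classical in
lemma card_sq_le_card_filter_of_forall_isMagicSquare [Fintype V] (hω : ω.IsAlt)
    (hn : ω.Nondegenerate) (hV : 8 ≤ Fintype.card V) {r : V → V → Prop}
    (hr : ∀ a b c d, IsMagicSquare ω a b c d →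
      (r a b ∨ r c d ∨ r (a + b) (c + d)) ∨ r a c ∨ r b d ∨ r (a + c) (b + d)) :
    Fintype.card V ^ 2 ≤ 1536 * #{p : V × V | r p.1 p.2} := by
  -- Each line of a square is paired with two entries that together determine the square.
  let e : Fin 6 → (V × V) × V × V → (V × V) × V × V := fun i q ↦
    let b := q.1.1; let c := q.1.2; let a := q.2.1; let d := q.2.2
    ![((a, b), c, d), ((c, d), a, b), ((a + b, c + d), a, c),
      ((a, c), b, d), ((b, d), a, c), ((a + c, b + d), a, b)] i
  have he (i : Fin 6) : Function.Injective (e i) := by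
    rintro ⟨⟨b, c⟩, a, d⟩ ⟨⟨b', c'⟩, a', d'⟩ h
    fin_cases i <;> simp [e] at h ⊢ <;> grind
  have hline : ∀ q ∈ ({q | IsMagicSquare ω q.2.1 q.1.1 q.1.2 q.2.2} : Finset ((V × V) × V × V)),
      ∃ i, (e i q).1 ∈ ({p | r p.1 p.2} : Finset (V × V)) := by
    intro q hq
    simp only [mem_filter_univ]
    rcases hr _ _ _ _ (mem_filter.1 hq).2 with (h | h | h) | h | h | h
    exacts [⟨0, h⟩, ⟨1, h⟩, ⟨2, h⟩, ⟨3, h⟩, ⟨4, h⟩, ⟨5, h⟩]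
  have hcard := (card_pow_four_le_card_filter_isMagicSquare hω hn hV).trans
    (Nat.mul_le_mul_left _ (card_le_card_mul_card_mul_card_of_injective e he hline))
  rw [Fintype.card_fin, Fintype.card_prod, ← sq] at hcard
  refine Nat.le_of_mul_le_mul_right (c := Fintype.card V ^ 2) ?_ (by positivity)
  linarith

end CharacteristicTwo

end MagicSquares

section Contextuality

variable {n : ℕ} {a b c d x y : PV n} {g : PV n → F2}

/-- The symplectic product `symp` as a bilinear form. -/
def sympForm (n : ℕ) : LinearMap.BilinForm F2 (PV n) :=
  LinearMap.mk₂ F2 symp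
    (fun x x' y ↦ by simp only [symp, Prod.fst_add, Prod.snd_add, Pi.add_apply, add_mul,
      sum_add_distrib]; ring)
    (fun s x y ↦ by simp only [symp, Prod.smul_fst, Prod.smul_snd, Pi.smul_apply, smul_eq_mul,
      mul_assoc, ← mul_sum, mul_add])
    (fun x y y' ↦ by simp only [symp, Prod.fst_add, Prod.snd_add, Pi.add_apply, mul_add,
      sum_add_distrib]; ring)
    (fun s x y ↦ by simp only [symp, Prod.smul_fst, Prod.smul_snd, Pi.smul_apply, smul_eq_mul,
      mul_left_comm _ s, ← mul_sum, mul_add])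

lemma sympForm_apply (x y : PV n) : sympForm n x y = symp x y := rfl

lemma symp_eq_dotProduct (x y : PV n) : symp x y = x.1 ⬝ᵥ y.2 + x.2 ⬝ᵥ y.1 := rfl

lemma sympForm_isAlt (n : ℕ) : (sympForm n).IsAlt := fun x ↦ by
  simp only [sympForm_apply, symp, mul_comm (x.2 _), CharTwo.add_self_eq_zero]

lemma sympForm_nondegenerate (n : ℕ) : (sympForm n).Nondegenerate := by
  refine ((sympForm_isAlt n).isRefl.nondegenerate_iff_separatingLeft).2 fun x hx ↦ ?_
  ext i
  · simpa [sympForm_apply, symp, Pi.single_apply] using hx (0, Pi.single i 1)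
  · simpa [sympForm_apply, symp, Pi.single_apply] using hx (Pi.single i 1, 0)

lemma finrank_PV (n : ℕ) : Module.finrank F2 (PV n) = 2 * n := by
  simp [two_mul]

lemma coe_lagrangiansAbove_sympForm_bot (n : ℕ) :
    (lagrangiansAbove (sympForm n) ⊥ : Set (Submodule F2 (PV n))) = Lset n n := by
  ext S
  simp only [mem_coe, mem_lagrangiansAbove, bot_le, true_and, Lset, Set.mem_ofPred_eq,
    orthogonal_eq_self_iff (sympForm_nondegenerate n) (finrank_PV n)]
  exact and_congr_left fun _ ↦ ⟨fun h x hx y hy ↦ h hy x hx, fun h y hy x hx ↦ h x hx y hy⟩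

/-- The character `s ↦ (-1) ^ s` of `F2`. -/
noncomputable def signChar : AddChar F2 ℂ :=
  AddChar.zmodChar 2 (neg_one_sq (R := ℂ))

lemma signChar_one : signChar 1 = -1 := by
  simp [signChar, AddChar.zmodChar_apply, ZMod.val_one]

lemma signChar_injective : Function.Injective signChar := by
  intro s t h
  by_contra hst
  have hs := (by decide : ∀ s t : F2, s ≠ t → s = t + 1) s t hst
  rw [hs, AddChar.map_add_eq_mul, signChar_one, mul_neg_one, neg_eq_self] at h
  exact (signChar.val_isUnit t).ne_zero h

lemma signChar_intCast (m : ℤ) : signChar m = (-1) ^ m := by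
  rcases Int.even_or_odd m with hm | hm
  · rw [hm.neg_one_zpow, (ZMod.intCast_eq_zero_iff_even).2 hm, AddChar.map_zero_eq_one]
  · rw [hm.neg_one_zpow, (ZMod.intCast_eq_one_iff_odd).2 hm, signChar_one]

lemma intCast_dotZ_liftZ (v w : Fin n → F2) :
    ((dotZ (liftZ v) (liftZ w) : ℤ) : F2) = v ⬝ᵥ w := by
  simp [dotZ, liftZ, dotProduct]

/-- The phase `i^{x̂₁·x̂₂}` that makes the Pauli operator `X^{x₁} Z^{x₂}` Hermitian. -/
noncomputable def pauliPhase (x : PV n) : ℂ :=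
  Complex.I ^ dotZ (liftZ x.1) (liftZ x.2)

lemma pauliPhase_ne_zero (x : PV n) : pauliPhase x ≠ 0 :=
  zpow_ne_zero _ Complex.I_ne_zero

lemma pauliPhase_sq (x : PV n) : pauliPhase x ^ 2 = signChar (x.1 ⬝ᵥ x.2) := by
  rw [← intCast_dotZ_liftZ, signChar_intCast, pauliPhase, ← zpow_natCast, zpow_comm, zpow_natCast,
    Complex.I_sq]

lemma phase_eq (x y : PV n) :
    phase x y = pauliPhase x * pauliPhase y / pauliPhase (x + y) * signChar (x.2 ⬝ᵥ y.1) := by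
  rw [phase, zpow_neg, ← signChar_intCast, intCast_dotZ_liftZ]
  rfl

lemma phase_sq (x y : PV n) : phase x y ^ 2 = signChar (symp x y) := by
  rw [phase_eq, mul_pow, div_pow, mul_pow, pauliPhase_sq, pauliPhase_sq, pauliPhase_sq, sq,
    ← AddChar.map_add_eq_mul, ← AddChar.map_add_eq_mul, ← AddChar.map_sub_eq_div,
    ← AddChar.map_add_eq_mul, CharTwo.add_self_eq_zero, symp_eq_dotProduct]
  simp only [Prod.fst_add, Prod.snd_add, add_dotProduct, dotProduct_add, dotProduct_comm y.1]
  congr 1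
  grind

lemma signChar_wght (h : symp x y = 0) : signChar (wght x y) = phase x y := by
  have hsq : phase x y ^ 2 = 1 := by rw [phase_sq, h, AddChar.map_zero_eq_one]
  rw [wght]
  split_ifs with h1
  · rw [h1, AddChar.map_zero_eq_one]
  · rw [(sq_eq_one_iff.1 hsq).resolve_left h1, signChar_one]

lemma phase_mul_phase_mul_phase (a b c d : PV n) :
    phase a b * phase c d * phase (a + b) (c + d) =
      signChar (symp b c) * (phase a c * phase b d * phase (a + c) (b + d)) := by
  have hbc : signChar (b.2 ⬝ᵥ c.1) = signChar (symp b c) * signChar (c.2 ⬝ᵥ b.1) := by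
    rw [← AddChar.map_add_eq_mul, symp_eq_dotProduct, dotProduct_comm b.1, add_comm, ← add_assoc,
      CharTwo.add_self_eq_zero, zero_add]
  have h := pauliPhase_ne_zero (n := n)
  simp only [phase_eq, add_add_add_comm a b, Prod.fst_add, Prod.snd_add, add_dotProduct,
    dotProduct_add, AddChar.map_add_eq_mul, hbc]
  field_simp [h]

lemma IsMagicSquare.sum_wght_eq (h : IsMagicSquare (sympForm n) a b c d) :
    wght a b + wght c d + wght (a + b) (c + d) =
      1 + (wght a c + wght b d + wght (a + c) (b + d)) := by
  have hω := sympForm_isAlt n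
  obtain ⟨hab, hcd, habcd⟩ := h.isIsotropicPair_rows hω
  obtain ⟨hac, hbd, hacbd⟩ := (h.transpose hω).isIsotropicPair_rows hω
  apply signChar_injective
  simp only [AddChar.map_add_eq_mul, signChar_wght hab.1, signChar_wght hcd.1,
    signChar_wght habcd.1, signChar_wght hac.1, signChar_wght hbd.1, signChar_wght hacbd.1]
  rw [phase_mul_phase_mul_phase, ← sympForm_apply, h.antidiagonal]

/-- An isotropic pair at which `g` violates the relation required of an outcome. -/
def IsFrustrated (g : PV n → F2) (x y : PV n) : Prop :=
  IsIsotropicPair (sympForm n) x y ∧ g (x + y) ≠ g x + g y + wght x y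

lemma IsMagicSquare.exists_isFrustrated (h : IsMagicSquare (sympForm n) a b c d)
    (g : PV n → F2) :
    (IsFrustrated g a b ∨ IsFrustrated g c d ∨ IsFrustrated g (a + b) (c + d)) ∨
      IsFrustrated g a c ∨ IsFrustrated g b d ∨ IsFrustrated g (a + c) (b + d) := by
  have hwght := h.sum_wght_eq
  have hcorner : g (a + b + (c + d)) = g (a + c + (b + d)) := by rw [add_add_add_comm]
  simp only [IsFrustrated, h.isIsotropicPair_rows (sympForm_isAlt n),
    (h.transpose (sympForm_isAlt n)).isIsotropicPair_rows (sympForm_isAlt n), true_and]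
  by_contra! hg
  obtain ⟨⟨hab, hcd, habcd⟩, hac, hbd, hacbd⟩ := hg
  grind

open scoped Classical in
lemma card_sq_le_card_filter_isFrustrated (hn : 2 ≤ n) (g : PV n → F2) :
    Fintype.card (PV n) ^ 2 ≤ 1536 * #{p : PV n × PV n | IsFrustrated g p.1 p.2} := by
  refine card_sq_le_card_filter_of_forall_isMagicSquare (sympForm_isAlt n)
    (sympForm_nondegenerate n) ?_ fun a b c d h ↦ h.exists_isFrustrated g
  rw [Module.card_eq_pow_finrank (K := F2), finrank_PV, ZMod.card]
  exact (show 8 ≤ 2 ^ (2 * 2) by norm_num).trans (Nat.pow_le_pow_right two_pos (by lia))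

lemma card_Lset (n : ℕ) : Nat.card (Lset n n) = lagrangianCount 2 n := by
  rw [← coe_lagrangiansAbove_sympForm_bot, Nat.card_eq_card_toFinset, toFinset_coe,
    card_lagrangiansAbove (sympForm_isAlt n) (sympForm_nondegenerate n) (finrank_PV n) bot_le
      (by rw [finrank_bot, zero_add]), ZMod.card]

lemma two_pow_mul_card_le_of_forall_eq_add_wght (hn : 2 < n) {D : Set (Submodule F2 (PV n))}
    (hD : D ⊆ Lset n n)
    (hg : ∀ S ∈ D, ∀ x ∈ S, ∀ y ∈ S, g (x + y) = g x + g y + wght x y) :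
    (2 : ℝ) ^ n * Nat.card D ≤ 196608 * Nat.card (Lset n n) := by
  classical
  obtain ⟨j, rfl⟩ := Nat.exists_eq_add_of_le' hn
  lift D to Finset (Submodule F2 (PV (j + 3))) using Set.toFinite D
  rw [← coe_lagrangiansAbove_sympForm_bot, coe_subset] at hD
  have hdense : 2 * (1 / 3072 : ℝ) * Fintype.card (PV (j + 3)) ^ 2 ≤
      ∑ x, (#{y | IsFrustrated g x y} : ℝ) := by
    have h := card_sq_le_card_filter_isFrustrated hn.le g
    rw [card_filter, ← univ_product_univ, sum_product] at h
    simp_rw [← card_filter] at h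
    rify at h
    linarith
  have hbound := mul_card_le_of_forall_notMem (sympForm_isAlt _) (sympForm_nondegenerate _)
    (finrank_PV _) (fun x y hy ↦ (mem_filter.1 hy).2.1) (by norm_num) hdense hD
    fun S hS x hx y hy hyS ↦ (mem_filter.1 hy).2.2 (hg S hS x hx y hyS)
  rw [ZMod.card] at hbound
  rw [card_Lset, Nat.card_eq_card_toFinset, toFinset_coe]
  push_cast at hbound
  linarith

lemma exists_forall_eq_of_consistentOn {D : Set (Submodule F2 (PV n))}
    {f : (S : Submodule F2 (PV n)) → S → F2}
    (hf : ∀ S₁ ∈ D, ∀ S₂ ∈ D, ConsistentOn (f S₁) (f S₂)) :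
    ∃ g : PV n → F2, ∀ S ∈ D, ∀ v (hv : v ∈ S), f S ⟨v, hv⟩ = g v := by
  classical
  refine ⟨fun v ↦ if h : ∃ S ∈ D, v ∈ S then f h.choose ⟨v, h.choose_spec.2⟩ else 0,
    fun S hS v hv ↦ ?_⟩
  have h : ∃ S ∈ D, v ∈ S := ⟨S, hS, hv⟩
  simp only [dif_pos h]
  exact hf S hS _ h.choose_spec.1 v hv _

end Contextuality

/-- **Incompleteness bound.** `Pval(L^n) ≤ 2^{-n+O(1)}`: there is a constant `C > 0` such
that for all `n ≥ 2`, every subset `D` of the maximal isotropic subspaces of `F2^{2n}`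
admitting a pairwise consistent family of outcomes satisfies
`|D|/|L^n_n| ≤ C · 2^{-n}`. -/
theorem pval_le_exp_decay :
    ∃ C : ℝ, 0 < C ∧ ∀ n : ℕ, 2 ≤ n →
      ∀ D ⊆ Lset n n,
        (∃ f : (S : Submodule F2 (PV n)) → (S → F2),
            (∀ S ∈ D, IsOutcome S (f S)) ∧
            (∀ S₁ ∈ D, ∀ S₂ ∈ D, ConsistentOn (f S₁) (f S₂))) →
        (Nat.card D : ℝ) / (Nat.card (Lset n n) : ℝ) ≤ C * (2 : ℝ) ^ (-(n : ℤ)) := by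
  refine ⟨196608, by norm_num, fun n hn D hD ⟨f, hf, hcons⟩ ↦ ?_⟩
  have hpos : (0 : ℝ) < Nat.card (Lset n n) := by
    rw [card_Lset]
    exact_mod_cast lagrangianCount_pos 2 n
  rw [zpow_neg, zpow_natCast, ← div_eq_mul_inv, div_le_div_iff₀ hpos (by positivity), mul_comm]
  obtain rfl | hn := hn.eq_or_lt
  · have hle : (Nat.card D : ℝ) ≤ Nat.card (Lset 2 2) :=
      mod_cast Nat.card_mono (Set.toFinite _) hD
    linarith
  · obtain ⟨g, hg⟩ := exists_forall_eq_of_consistentOn hcons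
    refine two_pow_mul_card_le_of_forall_eq_add_wght hn hD (g := g) fun S hS x hx y hy ↦ ?_
    rw [← hg S hS x hx, ← hg S hS y hy, ← hg S hS _ (S.add_mem hx hy)]
    exact hf S hS ⟨x, hx⟩ ⟨y, hy⟩
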